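/- Let ρ be a density matrix on A ⊗ B and suppose that for every unit vector ψ ∈ A ⊗ B of Schmidt rank at most 2, |⟨ψ|ρ|ψ⟩ − 1/(d_A d_B)| ≤ 2δ/(d_A d_B) with δ ≤ 1/10. Then for all rank-2 projectors P on A and Q on B, the state σ = (P⊗Q)ρ(P⊗Q)/Tr((P⊗Q)ρ) satisfies ‖σ − (1/4)(P⊗Q)‖_∞ ≤ 1/8, and hence σ is separable; in particular ρ is not one-copy distillable. -/

import Mathlib

open scoped BigOperators ComplexOrder
open Matrix

noncomputable section

namespace QIT

variable {n : Type*} [Fintype n] [DecidableEq n]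

/-- Density matrix of a pure state given by a unit vector. -/
def pureDM (φ : EuclideanSpace ℂ n) : Matrix n n ℂ :=
  Matrix.of fun i j => φ i * (starRingEnd ℂ) (φ j)

/-- A density matrix: positive semidefinite with unit trace. -/
def DensityMatrix (ρ : Matrix n n ℂ) : Prop := ρ.PosSemidef ∧ ρ.trace = 1

/-- Von Neumann entropy (base 2), via the eigenvalues. -/
def vNEntropy (ρ : Matrix n n ℂ) : ℝ :=
  if h : ρ.IsHermitian then ∑ i, -(h.eigenvalues i * Real.logb 2 (h.eigenvalues i)) else 0

/-- Trace norm of a Hermitian matrix, via eigenvalues. -/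
def traceNorm (M : Matrix n n ℂ) : ℝ :=
  if h : M.IsHermitian then ∑ i, |h.eigenvalues i| else 0

/-- Operator (spectral) norm. -/
def opNorm (M : Matrix n n ℂ) : ℝ := ‖Matrix.toEuclideanCLM (𝕜 := ℂ) M‖

/-- Apply a real function to a Hermitian matrix via the spectral theorem. -/
def hermApply (f : ℝ → ℝ) (M : Matrix n n ℂ) : Matrix n n ℂ :=
  if h : M.IsHermitian then
    (h.eigenvectorUnitary : Matrix n n ℂ) * Matrix.diagonal (fun i => (f (h.eigenvalues i) : ℂ)) *
      (h.eigenvectorUnitary : Matrix n n ℂ)ᴴ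
  else 0

/-- Matrix base-2 logarithm of a Hermitian matrix. -/
def mlog2 : Matrix n n ℂ → Matrix n n ℂ := hermApply (Real.logb 2)

/-- Matrix square root of a positive semidefinite matrix. -/
def msqrt : Matrix n n ℂ → Matrix n n ℂ := hermApply Real.sqrt

/-- Quantum relative entropy `D(ρ‖σ) = Tr ρ (log₂ ρ − log₂ σ)`. -/
def relEnt (ρ σ : Matrix n n ℂ) : ℝ := ((ρ * (mlog2 ρ - mlog2 σ)).trace).re

/-- Uhlmann fidelity `F(ρ,σ) = (Tr √(√ρ σ √ρ))²`. -/
def fidelity (ρ σ : Matrix n n ℂ) : ℝ := (((msqrt (msqrt ρ * σ * msqrt ρ)).trace).re) ^ 2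

/-- A projector. -/
def Projector (P : Matrix n n ℂ) : Prop := P.IsHermitian ∧ P * P = P

variable {dA dB : ℕ}

/-- Partial trace over the second factor. -/
def ptraceB (ρ : Matrix (Fin dA × Fin dB) (Fin dA × Fin dB) ℂ) : Matrix (Fin dA) (Fin dA) ℂ :=
  Matrix.of fun a a' => ∑ b, ρ (a, b) (a', b)

/-- Partial trace over the first factor. -/
def ptraceA (ρ : Matrix (Fin dA × Fin dB) (Fin dA × Fin dB) ℂ) : Matrix (Fin dB) (Fin dB) ℂ :=
  Matrix.of fun b b' => ∑ a, ρ (a, b) (a, b')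

/-- Kronecker (tensor) product of operators on the two factors. -/
def kron (P : Matrix (Fin dA) (Fin dA) ℂ) (Q : Matrix (Fin dB) (Fin dB) ℂ) :
    Matrix (Fin dA × Fin dB) (Fin dA × Fin dB) ℂ :=
  Matrix.of fun x y => P x.1 y.1 * Q x.2 y.2

/-- Partial transpose on the second factor. -/
def ptransposeB (ρ : Matrix (Fin dA × Fin dB) (Fin dA × Fin dB) ℂ) :
    Matrix (Fin dA × Fin dB) (Fin dA × Fin dB) ℂ :=
  Matrix.of fun x y => ρ (x.1, y.2) (y.1, x.2)

/-- Bipartite separability. -/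
def Separable (ρ : Matrix (Fin dA × Fin dB) (Fin dA × Fin dB) ℂ) : Prop :=
  ∃ (m : ℕ) (p : Fin m → ℝ) (a : Fin m → Matrix (Fin dA) (Fin dA) ℂ)
    (b : Fin m → Matrix (Fin dB) (Fin dB) ℂ),
    (∀ l, 0 ≤ p l) ∧ (∑ l, p l = 1) ∧
    (∀ l, (a l).PosSemidef ∧ (a l).trace = 1) ∧
    (∀ l, (b l).PosSemidef ∧ (b l).trace = 1) ∧
    ρ = ∑ l, (p l : ℂ) • kron (a l) (b l)

/-- Entanglement of formation. -/
def EoF (ρ : Matrix (Fin dA × Fin dB) (Fin dA × Fin dB) ℂ) : ℝ :=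
  sInf { x : ℝ | ∃ (m : ℕ) (p : Fin m → ℝ) (φ : Fin m → EuclideanSpace ℂ (Fin dA × Fin dB)),
    (∀ l, 0 ≤ p l) ∧ (∑ l, p l = 1) ∧ (∀ l, ‖φ l‖ = 1) ∧
    (ρ = ∑ l, (p l : ℂ) • pureDM (φ l)) ∧
    x = ∑ l, p l * vNEntropy (ptraceB (pureDM (φ l))) }

end QIT

/-- One-copy (pseudo-)distillability: some local rank-2 compression of `ρ` is NPT. -/
def OneCopyDistillable {dA dB : ℕ}
    (ρ : Matrix (Fin dA × Fin dB) (Fin dA × Fin dB) ℂ) : Prop :=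
  ∃ (P : Matrix (Fin dA) (Fin dA) ℂ) (Q : Matrix (Fin dB) (Fin dB) ℂ),
    QIT.Projector P ∧ P.rank = 2 ∧ QIT.Projector Q ∧ Q.rank = 2 ∧
    ¬ (QIT.ptransposeB (((1 / ((QIT.kron P Q * ρ).trace).re : ℝ) : ℂ) •
        (QIT.kron P Q * ρ * QIT.kron P Q))).PosSemidef

/-!
Every vector in the range of `P ⊗ Q`, with `P` and `Q` of rank `r`, has Schmidt rank at most `r`.
Hence the compression of `ρ` to this range has all its expectations within `ε c` of `c`; being
Hermitian, it is within `ε c` of `c • 1` in operator norm. After normalisation its distance to the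
maximally mixed state is at most `2 ε / (r² (1 - ε))`, which is at most `1 / r³` as soon as
`ε ≤ 1 / (2 r + 1)`; for `r = 2` this is the ball of radius `1 / 8`.

That ball consists of separable states. For a Hermitian contraction `A` on `ℂᵐ ⊗ ℂⁿ` it is enough
that `m • 1 + A` be a sum of products of positive operators. Write `A = (U + Uᴴ) / 2` with `U`
unitary and cut `U` into `m²` blocks `B` of size `n × n`: each block contributes
`[[1, B], [Bᴴ, 1]]`, which is a local compression of `[[1, W], [Wᴴ, 1]]` for a unitary `W`.
Diagonalising `W` writes the latter as a sum of products `[[1, z], [conj z, 1]] ⊗ F` with `|z| = 1`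
and `F` a projector.
-/

namespace QIT

open scoped Kronecker

section SeparableCone

variable {m n m' n' : Type*}

/-- The cone of unnormalised separable operators: finite sums of Kronecker products of positive
semidefinite matrices. -/
def separableCone (m n : Type*) : AddSubmonoid (Matrix (m × n) (m × n) ℂ) :=
  AddSubmonoid.closure {M | ∃ (a : Matrix m m ℂ) (b : Matrix n n ℂ),
    a.PosSemidef ∧ b.PosSemidef ∧ M = a ⊗ₖ b}

lemma kronecker_mem_separableCone {a : Matrix m m ℂ} {b : Matrix n n ℂ} (ha : a.PosSemidef)
    (hb : b.PosSemidef) : a ⊗ₖ b ∈ separableCone m n :=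
  AddSubmonoid.subset_closure ⟨a, b, ha, hb, rfl⟩

lemma map_mem_separableCone
    (f : Matrix (m × n) (m × n) ℂ →+ Matrix (m' × n') (m' × n') ℂ)
    (hf : ∀ (a : Matrix m m ℂ) (b : Matrix n n ℂ), a.PosSemidef → b.PosSemidef →
      f (a ⊗ₖ b) ∈ separableCone m' n')
    {M : Matrix (m × n) (m × n) ℂ} (hM : M ∈ separableCone m n) : f M ∈ separableCone m' n' := by
  refine (AddSubmonoid.closure_le (S := (separableCone m' n').comap f)).2 ?_ hM
  rintro _ ⟨a, b, ha, hb, rfl⟩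
  exact hf a b ha hb

lemma smul_mem_separableCone {M : Matrix (m × n) (m × n) ℂ} (hM : M ∈ separableCone m n) {t : ℝ}
    (ht : 0 ≤ t) : (t : ℂ) • M ∈ separableCone m n := by
  refine map_mem_separableCone (DistribSMul.toAddMonoidHom _ (t : ℂ)) (fun a b ha hb ↦ ?_) hM
  rw [DistribSMul.toAddMonoidHom_apply, ← smul_kronecker]
  exact kronecker_mem_separableCone (ha.smul (Complex.zero_le_real.2 ht)) hb

lemma submatrix_mem_separableCone {M : Matrix (m × n) (m × n) ℂ} (hM : M ∈ separableCone m n)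
    (f : m' → m) (g : n' → n) :
    M.submatrix (Prod.map f g) (Prod.map f g) ∈ separableCone m' n' :=
  map_mem_separableCone
    { toFun := fun M ↦ M.submatrix (Prod.map f g) (Prod.map f g)
      map_zero' := rfl
      map_add' := fun _ _ ↦ rfl }
    (fun _ _ ha hb ↦ kronecker_mem_separableCone (ha.submatrix f) (hb.submatrix g)) hM

lemma conj_kronecker_mem_separableCone [Fintype m] [Fintype n] [Finite m'] [Finite n']
    {M : Matrix (m × n) (m × n) ℂ} (hM : M ∈ separableCone m n)
    (V : Matrix m' m ℂ) (W : Matrix n' n ℂ) :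
    V ⊗ₖ W * M * (V ⊗ₖ W)ᴴ ∈ separableCone m' n' := by
  refine map_mem_separableCone
    ((addMonoidHomMulRight (V ⊗ₖ W)ᴴ).comp (addMonoidHomMulLeft (V ⊗ₖ W))) (fun a b ha hb ↦ ?_) hM
  have hconj : V ⊗ₖ W * a ⊗ₖ b * (V ⊗ₖ W)ᴴ = (V * a * Vᴴ) ⊗ₖ (W * b * Wᴴ) := by
    simp only [conjTranspose_kronecker, mul_kronecker_mul]
  change V ⊗ₖ W * a ⊗ₖ b * (V ⊗ₖ W)ᴴ ∈ _
  rw [hconj]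
  exact kronecker_mem_separableCone (ha.mul_mul_conjTranspose_same V)
    (hb.mul_mul_conjTranspose_same W)

end SeparableCone

section Separable

variable {n : Type*} [Fintype n]

lemma exists_eq_smul_densityMatrix [Nonempty n] {a : Matrix n n ℂ}
    (ha : a.PosSemidef) :
    ∃ (t : ℝ) (a' : Matrix n n ℂ), 0 ≤ t ∧ DensityMatrix a' ∧ a = (t : ℂ) • a' := by
  classical
  by_cases htr : a.trace = 0
  · obtain ⟨i⟩ := ‹Nonempty n›
    refine ⟨0, diagonal (Pi.single i 1), le_rfl, ⟨?_, ?_⟩, ?_⟩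
    · exact PosSemidef.diagonal (Pi.single_nonneg.2 zero_le_one)
    · simp [trace_diagonal]
    · rw [ha.trace_eq_zero_iff.1 htr, Complex.ofReal_zero, zero_smul]
  · obtain ⟨t, ht, hta⟩ : ∃ t : ℝ, 0 ≤ t ∧ (t : ℂ) = a.trace :=
      RCLike.nonneg_iff_exists_ofReal.1 ha.trace_nonneg
    rw [← hta] at htr
    refine ⟨t, (t : ℂ)⁻¹ • a, ht, ⟨ha.smul ?_, ?_⟩, ?_⟩
    · rw [← Complex.ofReal_inv]
      exact Complex.zero_le_real.2 (inv_nonneg.2 ht)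
    · rw [trace_smul, ← hta, smul_eq_mul, inv_mul_cancel₀ htr]
    · rw [smul_inv_smul₀ htr]

variable {dA dB : ℕ}

lemma kron_eq_kronecker (P : Matrix (Fin dA) (Fin dA) ℂ) (Q : Matrix (Fin dB) (Fin dB) ℂ) :
    kron P Q = P ⊗ₖ Q := rfl

lemma separable_of_mem_separableCone {M : Matrix (Fin dA × Fin dB) (Fin dA × Fin dB) ℂ}
    (hM : M ∈ separableCone (Fin dA) (Fin dB)) (htr : M.trace = 1) : Separable M := by
  obtain ⟨⟨i, j⟩, -⟩ : ∃ x, M x x ≠ 0 := by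
    by_contra! hdiag
    exact zero_ne_one ((Finset.sum_eq_zero fun x _ ↦ hdiag x).symm.trans htr)
  have : Nonempty (Fin dA) := ⟨i⟩
  have : Nonempty (Fin dB) := ⟨j⟩
  obtain ⟨l, hl, rfl⟩ := AddSubmonoid.exists_list_of_mem_closure hM
  have hterm (k : Fin l.length) : ∃ (t : ℝ) (a : Matrix (Fin dA) (Fin dA) ℂ)
      (b : Matrix (Fin dB) (Fin dB) ℂ),
      0 ≤ t ∧ DensityMatrix a ∧ DensityMatrix b ∧ l[k] = (t : ℂ) • kron a b := by
    obtain ⟨a, b, ha, hb, hab⟩ := hl l[k] (l.getElem_mem k.2)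
    obtain ⟨s, a', hs, ha', rfl⟩ := exists_eq_smul_densityMatrix ha
    obtain ⟨t, b', ht, hb', rfl⟩ := exists_eq_smul_densityMatrix hb
    refine ⟨s * t, a', b', mul_nonneg hs ht, ha', hb', ?_⟩
    rw [hab, smul_kronecker, kronecker_smul, smul_smul, Complex.ofReal_mul, kron_eq_kronecker]
  choose p a b hp ha hb hpab using hterm
  have hsum : l.sum = ∑ k, (p k : ℂ) • kron (a k) (b k) := by
    rw [← Fin.sum_univ_getElem]
    exact Finset.sum_congr rfl fun k _ ↦ hpab k
  refine ⟨l.length, p, a, b, hp, ?_, ha, hb, hsum⟩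
  rw [hsum, trace_sum] at htr
  simp only [trace_smul, kron_eq_kronecker, trace_kronecker, (ha _).2, (hb _).2, mul_one,
    smul_eq_mul] at htr
  exact_mod_cast htr

lemma Separable.posSemidef_ptransposeB {ρ : Matrix (Fin dA × Fin dB) (Fin dA × Fin dB) ℂ}
    (hρ : Separable ρ) : (ptransposeB ρ).PosSemidef := by
  obtain ⟨m, p, a, b, hp, -, ha, hb, rfl⟩ := hρ
  have hpt : ptransposeB (∑ k, (p k : ℂ) • kron (a k) (b k)) =
      ∑ k, (p k : ℂ) • (a k ⊗ₖ (b k)ᵀ) := by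
    ext x y
    simp [ptransposeB, kron, Matrix.sum_apply]
  rw [hpt]
  exact posSemidef_sum _ fun k _ ↦
    ((ha k).1.kronecker (hb k).1.transpose).smul (Complex.zero_le_real.2 (hp k))

end Separable

section UnitaryBlocks

open scoped Matrix.Norms.L2Operator MatrixOrder

variable {m n : Type*} [Finite m] [DecidableEq m] [Fintype n] [DecidableEq n]

lemma exists_spectral_resolution_of_mem_unitaryGroup {W : Matrix n n ℂ}
    (hW : W ∈ unitaryGroup n ℂ) :
    ∃ (s : Finset ℂ) (F : ℂ → Matrix n n ℂ), (∀ z, (F z).PosSemidef) ∧ (∀ z ∈ s, ‖z‖ = 1) ∧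
      ∑ z ∈ s, F z = 1 ∧ ∑ z ∈ s, z • F z = W := by
  have hfin : (spectrum ℂ W).Finite := W.finite_spectrum
  have hnormal : IsStarNormal W := ⟨by rw [commute_iff_eq, hW.1, hW.2]⟩
  have hcont (f : ℂ → ℂ) : ContinuousOn f (spectrum ℂ W) := hfin.continuousOn f
  have hsum (c : ℂ → ℂ) : ∑ z ∈ hfin.toFinset, c z • cfc (Pi.single z (1 : ℂ)) W = cfc c W := by
    simp_rw [← cfc_smul _ _ W (hcont _)]
    rw [← cfc_sum _ W _ fun z _ ↦ hcont _]
    refine cfc_congr fun z hz ↦ ?_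
    simp [Finset.sum_apply, Pi.single_apply, hz]
  refine ⟨hfin.toFinset, fun z ↦ cfc (Pi.single z (1 : ℂ)) W, fun z ↦ ?_, fun z hz ↦ ?_, ?_, ?_⟩
  · exact Matrix.nonneg_iff_posSemidef.1 (cfc_nonneg fun x _ ↦
      (Pi.single_nonneg.2 zero_le_one : (0 : ℂ → ℂ) ≤ Pi.single z 1) x)
  · exact mem_sphere_zero_iff_norm.1 (spectrum.subset_circle_of_unitary hW (hfin.mem_toFinset.1 hz))
  · simpa only [one_smul, cfc_const_one ℂ W] using hsum fun _ ↦ 1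
  · simpa only [cfc_id' ℂ W] using hsum fun z ↦ z

/-- The `2 × 2` block matrix `[[1, B], [Bᴴ, 1]]` placed in the rows and columns `i`, `j` of the
first tensor factor; these are the building blocks of the separable decomposition. -/
def coherentPair (i j : m) (B : Matrix n n ℂ) : Matrix (m × n) (m × n) ℂ :=
  (single i i 1 + single j j 1) ⊗ₖ (1 : Matrix n n ℂ) + single i j 1 ⊗ₖ B + single j i 1 ⊗ₖ Bᴴ

lemma posSemidef_single_add_single (i j : m) {z : ℂ} (hz : ‖z‖ = 1) :
    (single i i 1 + single j j 1 + z • single i j 1 + star z • single j i 1 :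
      Matrix m m ℂ).PosSemidef := by
  have hzz : z * star z = 1 := by
    rw [Complex.star_def, Complex.mul_conj', hz, Complex.ofReal_one, one_pow]
  have hvec : single i i 1 + single j j 1 + z • single i j 1 + star z • single j i 1 =
      vecMulVec (z • Pi.single i 1 + Pi.single j 1) (star (z • Pi.single i 1 + Pi.single j 1)) := by
    have hreal (k : m) : star (Pi.single k 1 : m → ℂ) = Pi.single k 1 := by
      rw [← Pi.single_star, star_one]
    simp only [single_eq_single_vecMulVec_single, star_add, star_smul, hreal, add_vecMulVec,
      vecMulVec_add, smul_vecMulVec, vecMulVec_smul, smul_add, smul_smul, mul_comm (star z), hzz,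
      one_smul]
    abel
  rw [hvec]
  exact posSemidef_vecMulVec_self_star _

lemma coherentPair_mem_separableCone (i j : m) {W : Matrix n n ℂ} (hW : W ∈ unitaryGroup n ℂ) :
    coherentPair i j W ∈ separableCone m n := by
  obtain ⟨s, F, hF, hs, hone, hsum⟩ := exists_spectral_resolution_of_mem_unitaryGroup hW
  have hdecomp : coherentPair i j W = ∑ z ∈ s,
      (single i i 1 + single j j 1 + z • single i j 1 + star z • single j i 1) ⊗ₖ F z := by
    have hstar : ∑ z ∈ s, star z • F z = Wᴴ := by
      simp only [← hsum, conjTranspose_sum, conjTranspose_smul, (hF _).1.eq]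
    have hkron (A : Matrix m m ℂ) (G : ℂ → Matrix n n ℂ) :
        A ⊗ₖ ∑ z ∈ s, G z = ∑ z ∈ s, A ⊗ₖ G z := by
      ext
      simp [Matrix.sum_apply, Finset.mul_sum]
    rw [coherentPair, ← hone, ← hstar, ← hsum]
    simp only [hkron, ← Finset.sum_add_distrib, add_kronecker, smul_kronecker, kronecker_smul]
  rw [hdecomp]
  exact sum_mem fun z hz ↦
    kronecker_mem_separableCone (posSemidef_single_add_single i j (hs z hz)) (hF z)

-- Permuting the columns of `U` turns the block into a principal submatrix of another unitary, so
-- this coherent pair is a local compression of one built from a unitary.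
lemma coherentPair_block_mem_separableCone {k : Type*} [DecidableEq k] {U : Matrix n n ℂ}
    (hU : U ∈ unitaryGroup n ℂ) (i j : m) {f g : k → n}
    (hf : f.Injective) (hg : g.Injective) :
    coherentPair i j (U.submatrix f g) ∈ separableCone m k := by
  classical
  obtain ⟨e, he⟩ : ∃ e : Equiv.Perm n, ∀ x, e (f x) = g x :=
    ⟨((Equiv.ofInjective f hf).symm.trans (Equiv.ofInjective g hg)).extendSubtype, fun x ↦ by
      rw [Equiv.extendSubtype_apply_of_mem _ _ (Set.mem_range_self x)]
      simp⟩
  have hUe : U.submatrix id e ∈ unitaryGroup n ℂ := by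
    rw [mem_unitaryGroup_iff, star_eq_conjTranspose, conjTranspose_submatrix,
      submatrix_mul_equiv, ← star_eq_conjTranspose, mem_unitaryGroup_iff.1 hU, submatrix_id_id]
  have hsub : coherentPair i j (U.submatrix f g) =
      (coherentPair i j (U.submatrix id e)).submatrix (Prod.map id f) (Prod.map id f) := by
    ext ⟨a, x⟩ ⟨b, y⟩
    simp [coherentPair, he, one_apply, hf.eq_iff]
  rw [hsub]
  exact submatrix_mem_separableCone (coherentPair_mem_separableCone i j hUe) id f

end UnitaryBlocks

section Ball

open scoped Matrix.Norms.L2Operator MatrixOrder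

variable {m n : Type*} [Fintype m] [DecidableEq m]

lemma sum_sum_single_kronecker_block (X : Matrix (m × n) (m × n) ℂ) :
    ∑ i, ∑ j, single i j 1 ⊗ₖ X.submatrix (Prod.mk i) (Prod.mk j) = X := by
  ext ⟨a, x⟩ ⟨b, y⟩
  simp [Matrix.sum_apply, single_apply, ite_and]

variable [DecidableEq n]

lemma sum_sum_coherentPair (X : Matrix (m × n) (m × n) ℂ) :
    ∑ i, ∑ j, coherentPair i j (X.submatrix (Prod.mk i) (Prod.mk j)) =
      (2 * Fintype.card m : ℂ) • 1 + X + Xᴴ := by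
  have hdiag : ∑ i : m, single i i (1 : ℂ) ⊗ₖ (1 : Matrix n n ℂ) = 1 := by
    ext ⟨a, x⟩ ⟨b, y⟩
    by_cases hab : a = b <;> simp [Matrix.sum_apply, single_apply, ite_and, one_apply, hab]
  have hstar : ∑ i, ∑ j, single j i 1 ⊗ₖ (X.submatrix (Prod.mk i) (Prod.mk j))ᴴ = Xᴴ := by
    rw [Finset.sum_comm]
    exact sum_sum_single_kronecker_block Xᴴ
  simp only [coherentPair, add_kronecker, Finset.sum_add_distrib, Finset.sum_const,
    Finset.card_univ, ← Finset.smul_sum, hdiag, hstar, sum_sum_single_kronecker_block]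
  rw [← two_nsmul, smul_smul, ← Nat.cast_smul_eq_nsmul ℂ]
  push_cast
  rfl

variable [Fintype n]

lemma smul_one_add_mem_separableCone_of_mem_unitaryGroup {U : Matrix (m × n) (m × n) ℂ}
    (hU : U ∈ unitaryGroup (m × n) ℂ) :
    (2 * Fintype.card m : ℂ) • 1 + U + Uᴴ ∈ separableCone m n := by
  rw [← sum_sum_coherentPair]
  exact sum_mem fun i _ ↦ sum_mem fun j _ ↦ coherentPair_block_mem_separableCone hU i j
    (Prod.mk_right_injective i) (Prod.mk_right_injective j)

lemma exists_mem_unitaryGroup_add_conjTranspose_eq {p : Type*} [Fintype p] [DecidableEq p]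
    {A : Matrix p p ℂ} (hA : A.IsHermitian) (hnorm : ‖A‖ ≤ 1) :
    ∃ U ∈ unitaryGroup p ℂ, U + Uᴴ = (2 : ℂ) • A := by
  let u := selfAdjoint.unitarySelfAddISMul ⟨A, hA⟩ hnorm
  refine ⟨u, u.2, ?_⟩
  have hstar : (u : Matrix p p ℂ)ᴴ = A - Complex.I • CFC.sqrt (1 - A ^ 2) :=
    selfAdjoint.star_coe_unitarySelfAddISMul _ _
  rw [hstar, two_smul]
  exact add_add_sub_cancel _ _ _

lemma smul_one_add_mem_separableCone {A : Matrix (m × n) (m × n) ℂ} (hA : A.IsHermitian) {r : ℝ}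
    (hr : ‖A‖ ≤ r) : ((Fintype.card m * r : ℝ) : ℂ) • 1 + A ∈ separableCone m n := by
  rcases (norm_nonneg A |>.trans hr).eq_or_lt with rfl | hpos
  · rw [norm_le_zero_iff.1 hr]
    simp
  have hr0 : (r : ℂ) ≠ 0 := Complex.ofReal_ne_zero.2 hpos.ne'
  have hscaled : ‖(r : ℂ)⁻¹ • A‖ ≤ 1 := by
    rw [norm_smul, norm_inv, Complex.norm_of_nonneg hpos.le]
    exact inv_mul_le_one_of_le₀ hr hpos.le
  obtain ⟨U, hU, hUA⟩ := exists_mem_unitaryGroup_add_conjTranspose_eq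
    (hA.smul (by simp [IsSelfAdjoint] : IsSelfAdjoint (r : ℂ)⁻¹)) hscaled
  have hscale : ((Fintype.card m * r : ℝ) : ℂ) • 1 + A =
      ((r / 2 : ℝ) : ℂ) • ((2 * Fintype.card m : ℂ) • 1 + U + Uᴴ) := by
    rw [add_assoc, hUA, smul_add, smul_smul, smul_smul, smul_smul]
    push_cast
    congr 2
    · ring
    · rw [div_mul_cancel₀ _ two_ne_zero, mul_inv_cancel₀ hr0, one_smul]
  rw [hscale]
  exact smul_mem_separableCone (smul_one_add_mem_separableCone_of_mem_unitaryGroup hU)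
    (half_pos hpos).le

end Ball

section OperatorNorm

open scoped Matrix.Norms.L2Operator

variable {n p : Type*} [Fintype n] [DecidableEq n]

lemma opNorm_eq_norm (M : Matrix n n ℂ) : opNorm M = ‖M‖ := rfl

lemma pureDM_eq_vecMulVec {ι : Type*} (ψ : EuclideanSpace ℂ ι) :
    pureDM ψ = vecMulVec ψ (star ψ) := rfl

lemma trace_mul_pureDM (A : Matrix n n ℂ) (ψ : EuclideanSpace ℂ n) :
    (A * pureDM ψ).trace = inner ℂ ψ (toEuclideanCLM (𝕜 := ℂ) A ψ) := by
  rw [pureDM_eq_vecMulVec, mul_vecMulVec, trace_vecMulVec]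
  rfl

lemma norm_le_of_abs_re_trace_mul_pureDM_le [Nonempty n] {A : Matrix n n ℂ} (hA : A.IsHermitian)
    {r : ℝ} (h : ∀ ψ : EuclideanSpace ℂ n, ‖ψ‖ = 1 → |(A * pureDM ψ).trace.re| ≤ r) :
    ‖A‖ ≤ r := by
  let T := toEuclideanCLM (𝕜 := ℂ) A
  have hT : T.IsSymmetric := isSymmetric_toEuclideanLin_iff.2 hA
  have hunit (ψ : EuclideanSpace ℂ n) (hψ : ‖ψ‖ = 1) : |T.rayleighQuotient ψ| ≤ r := by
    have hquot : T.rayleighQuotient ψ = (A * pureDM ψ).trace.re := by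
      rw [ContinuousLinearMap.rayleighQuotient, hψ, one_pow, div_one,
        ContinuousLinearMap.reApplyInnerSelf_apply, inner_re_symm, trace_mul_pureDM]
      rfl
    exact hquot ▸ h ψ hψ
  have hr : 0 ≤ r := (abs_nonneg _).trans
    (hunit (EuclideanSpace.single (Classical.arbitrary n) 1) (by simp))
  change ‖T‖ ≤ r
  rw [T.norm_eq_iSup_rayleighQuotient hT]
  refine ciSup_le fun x ↦ ?_
  obtain rfl | hx := eq_or_ne x 0
  · simpa using hr
  · rw [← T.rayleigh_smul x (inv_ne_zero (Complex.ofReal_ne_zero.2 (norm_ne_zero_iff.2 hx)))]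
    exact hunit _ (norm_smul_inv_norm hx)

lemma norm_apply_le_l2_opNorm (A : Matrix n n ℂ) (i j : n) : ‖A i j‖ ≤ ‖A‖ := by
  have hcol : ‖(WithLp.toLp 2 (A *ᵥ EuclideanSpace.single j 1) : EuclideanSpace ℂ n) i‖ ≤ ‖A‖ :=
    (PiLp.norm_apply_le _ i).trans ((l2_opNorm_mulVec A _).trans_eq (by simp))
  simpa using hcol

lemma norm_trace_le (A : Matrix n n ℂ) : ‖A.trace‖ ≤ Fintype.card n * ‖A‖ :=
  calc ‖A.trace‖ ≤ ∑ i, ‖A i i‖ := norm_sum_le _ _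
    _ ≤ ∑ _i : n, ‖A‖ := Finset.sum_le_sum fun i _ ↦ norm_apply_le_l2_opNorm A i i
    _ = Fintype.card n * ‖A‖ := by rw [Finset.sum_const, Finset.card_univ, nsmul_eq_mul]

lemma l2_opNorm_one_le : ‖(1 : Matrix n n ℂ)‖ ≤ 1 := by
  rw [cstar_norm_def, map_one]
  exact ContinuousLinearMap.norm_id_le

lemma l2_opNorm_le_one_of_conjTranspose_mul_self [Fintype p] [DecidableEq p]
    {m : Type*} [Fintype m] {K : Matrix m p ℂ} (hK : Kᴴ * K = 1) : ‖K‖ ≤ 1 := by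
  refine abs_le_one_iff_mul_self_le_one.2 ?_ |> (le_abs_self _).trans
  rw [← l2_opNorm_conjTranspose_mul_self, hK]
  exact l2_opNorm_one_le

lemma l2_opNorm_conj_le [Fintype p] [DecidableEq p] {K : Matrix n p ℂ} (hK : Kᴴ * K = 1)
    (X : Matrix p p ℂ) : ‖K * X * Kᴴ‖ ≤ ‖X‖ := by
  have hK1 : ‖K‖ ≤ 1 := l2_opNorm_le_one_of_conjTranspose_mul_self hK
  calc ‖K * X * Kᴴ‖ ≤ ‖K‖ * ‖X‖ * ‖Kᴴ‖ := by
        grw [l2_opNorm_mul, l2_opNorm_mul]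
    _ ≤ 1 * ‖X‖ * 1 := by rw [l2_opNorm_conjTranspose]; gcongr
    _ = ‖X‖ := by rw [one_mul, mul_one]

lemma abs_re_trace_sub_card_mul_le (M : Matrix n n ℂ) (c : ℝ) :
    |M.trace.re - Fintype.card n * c| ≤ Fintype.card n * ‖M - (c : ℂ) • 1‖ := by
  have htrace : M.trace.re - Fintype.card n * c = (M - (c : ℂ) • 1).trace.re := by
    simp [trace_sub, trace_smul, trace_one, mul_comm]
  rw [htrace]
  exact (Complex.abs_re_le_norm _).trans (norm_trace_le _)

lemma card_mul_le_re_trace {M : Matrix n n ℂ} {c ε : ℝ} (hM : ‖M - (c : ℂ) • 1‖ ≤ ε * c) :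
    Fintype.card n * (c * (1 - ε)) ≤ M.trace.re := by
  have hdev : |M.trace.re - Fintype.card n * c| ≤ Fintype.card n * (ε * c) :=
    (abs_re_trace_sub_card_mul_le M c).trans (by gcongr)
  linarith [(abs_le.1 hdev).1]

lemma norm_normalize_sub_le [Nonempty n] {M : Matrix n n ℂ} {c ε : ℝ}
    (hc : 0 < c) (hε : ε < 1) (hM : ‖M - (c : ℂ) • 1‖ ≤ ε * c) :
    ‖((1 / M.trace.re : ℝ) : ℂ) • M - ((1 / Fintype.card n : ℝ) : ℂ) • 1‖ ≤
      2 * ε / (Fintype.card n * (1 - ε)) := by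
  set t := M.trace.re
  set N : ℝ := (Fintype.card n : ℝ)
  have hN0 : 0 < N := Nat.cast_pos.2 Fintype.card_pos
  have hlow : N * (c * (1 - ε)) ≤ t := card_mul_le_re_trace hM
  have hlow0 : 0 < N * (c * (1 - ε)) := mul_pos hN0 (mul_pos hc (sub_pos.2 hε))
  have ht0 : 0 < t := hlow0.trans_le hlow
  have hmean : |c - t / N| ≤ ε * c :=
    calc |c - t / N| = |t - N * c| / N := by
          rw [abs_sub_comm, ← abs_of_pos hN0, ← abs_div, abs_of_pos hN0, sub_div,
            mul_div_cancel_left₀ _ hN0.ne']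
      _ ≤ N * (ε * c) / N := by
          gcongr
          exact (abs_re_trace_sub_card_mul_le M c).trans (by gcongr)
      _ = ε * c := mul_div_cancel_left₀ _ hN0.ne'
  have hsplit : ((1 / t : ℝ) : ℂ) • M - ((1 / N : ℝ) : ℂ) • 1 =
      ((1 / t : ℝ) : ℂ) • ((M - (c : ℂ) • 1) + ((c - t / N : ℝ) : ℂ) • 1) := by
    have : (t : ℂ) ≠ 0 := Complex.ofReal_ne_zero.2 ht0.ne'
    have : (N : ℂ) ≠ 0 := Complex.ofReal_ne_zero.2 hN0.ne'
    push_cast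
    match_scalars <;> field_simp
    ring
  calc _ = 1 / t * ‖(M - (c : ℂ) • 1) + ((c - t / N : ℝ) : ℂ) • 1‖ := by
        rw [hsplit, norm_smul, Complex.norm_of_nonneg (by positivity)]
    _ ≤ 1 / t * (ε * c + ε * c) := by
        gcongr
        refine (norm_add_le _ _).trans (add_le_add hM ?_)
        rw [norm_smul, Complex.norm_real]
        exact (mul_le_of_le_one_right (norm_nonneg _) l2_opNorm_one_le).trans hmean
    _ ≤ 1 / (N * (c * (1 - ε))) * (ε * c + ε * c) := by
        gcongr
        linarith [norm_nonneg _ |>.trans hM]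
    _ = 2 * ε / (N * (1 - ε)) := by
        have := (sub_pos.2 hε).ne'
        field_simp
        ring

end OperatorNorm

section Compression

variable {m n p : Type*} [Fintype n]

lemma trace_normalize {M : Matrix n n ℂ} (hM : M.IsHermitian)
    (htr : M.trace.re ≠ 0) : (((1 / M.trace.re : ℝ) : ℂ) • M).trace = 1 := by
  have hreal : ((M.trace.re : ℝ) : ℂ) = M.trace := by
    rw [← Complex.conj_eq_iff_re, ← Complex.star_def, ← trace_conjTranspose, hM]
  rw [trace_smul, smul_eq_mul, ← hreal, Complex.ofReal_re, ← Complex.ofReal_mul,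
    one_div_mul_cancel htr, Complex.ofReal_one]

lemma Projector.exists_isometry {P : Matrix n n ℂ} {r : ℕ} (hP : Projector P)
    (hr : P.rank = r) : ∃ V : Matrix n (Fin r) ℂ, V * Vᴴ = P ∧ Vᴴ * V = 1 := by
  classical
  let T := toEuclideanCLM (𝕜 := ℂ) P
  have hproj : IsStarProjection T := IsStarProjection.map (x := P) ⟨hP.2, hP.1⟩ toEuclideanCLM
  have hrank : Module.finrank ℂ T.range = r := by
    rw [← hr, P.rank_eq_finrank_range_toLin (PiLp.basisFun 2 ℂ n) (PiLp.basisFun 2 ℂ n)]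
    rfl
  obtain ⟨_, hT⟩ := isStarProjection_iff_eq_starProjection_range.1 hproj
  let b := (stdOrthonormalBasis ℂ T.range).reindex (finCongr hrank)
  have hTb : T = ∑ k, InnerProductSpace.rankOne ℂ
      (b k : EuclideanSpace ℂ n) (b k : EuclideanSpace ℂ n) :=
    hT.trans b.starProjection_eq_sum_rankOne
  refine ⟨of fun i k ↦ (b k : EuclideanSpace ℂ n) i, ?_, ?_⟩
  · ext i j
    have hTij : T (EuclideanSpace.single j 1) i = P i j := by simp [T]
    have hTij' := congrArg (fun S : EuclideanSpace ℂ n →L[ℂ] EuclideanSpace ℂ n ↦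
      S (EuclideanSpace.single j 1) i) hTb
    simpa [mul_apply, mul_comm, hTij, EuclideanSpace.inner_single_right] using hTij'.symm
  · ext k l
    have horth := orthonormal_iff_ite.1 b.orthonormal k l
    rw [Submodule.coe_inner, EuclideanSpace.inner_eq_star_dotProduct] at horth
    rw [one_apply, ← horth, dotProduct_comm]
    rfl

variable [Fintype p]

lemma pureDM_toLp_mulVec (K : Matrix m p ℂ) (φ : EuclideanSpace ℂ p) :
    pureDM (WithLp.toLp 2 (K *ᵥ φ)) = K * pureDM φ * Kᴴ := by
  simp only [pureDM_eq_vecMulVec]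
  rw [mul_vecMulVec, vecMulVec_mul, star_mulVec]

lemma trace_pureDM (ψ : EuclideanSpace ℂ p) : (pureDM ψ).trace = (‖ψ‖ : ℂ) ^ 2 := by
  rw [pureDM_eq_vecMulVec, trace_vecMulVec]
  exact inner_self_eq_norm_sq_to_K (𝕜 := ℂ) ψ

lemma norm_toLp_mulVec_of_isometry [DecidableEq p] {K : Matrix n p ℂ} (hK : Kᴴ * K = 1)
    (φ : EuclideanSpace ℂ p) : ‖WithLp.toLp 2 (K *ᵥ φ)‖ = ‖φ‖ := by
  rw [← sq_eq_sq₀ (norm_nonneg _) (norm_nonneg _)]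
  have htrace : (pureDM (WithLp.toLp 2 (K *ᵥ φ))).trace = (pureDM φ).trace := by
    rw [pureDM_toLp_mulVec, trace_mul_comm, ← Matrix.mul_assoc, hK, Matrix.one_mul]
  rw [trace_pureDM, trace_pureDM] at htrace
  exact_mod_cast htrace

end Compression

section SchmidtRank

variable {dA dB rA rB : ℕ}

/-- The matrix `(φ (a, b))_{a, b}` of coefficients of a bipartite vector. -/
def coeffMatrix {m n : Type*} (φ : m × n → ℂ) : Matrix m n ℂ :=
  of fun a b ↦ φ (a, b)

lemma ptraceB_pureDM (ψ : EuclideanSpace ℂ (Fin dA × Fin dB)) :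
    ptraceB (pureDM ψ) = coeffMatrix ψ * (coeffMatrix ψ)ᴴ := rfl

lemma coeffMatrix_kronecker_mulVec (V : Matrix (Fin dA) (Fin rA) ℂ) (W : Matrix (Fin dB) (Fin rB) ℂ)
    (φ : Fin rA × Fin rB → ℂ) : coeffMatrix ((V ⊗ₖ W) *ᵥ φ) = V * coeffMatrix φ * Wᵀ := by
  ext a b
  simp only [coeffMatrix, of_apply, mulVec, dotProduct, Fintype.sum_prod_type, mul_apply,
    kronecker_apply, transpose_apply, Finset.sum_mul]
  rw [Finset.sum_comm]
  exact Finset.sum_congr rfl fun _ _ ↦ Finset.sum_congr rfl fun _ _ ↦ by ring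

lemma rank_ptraceB_pureDM_kronecker_mulVec_le (V : Matrix (Fin dA) (Fin rA) ℂ)
    (W : Matrix (Fin dB) (Fin rB) ℂ) (φ : EuclideanSpace ℂ (Fin rA × Fin rB)) :
    (ptraceB (pureDM (WithLp.toLp 2 ((V ⊗ₖ W) *ᵥ φ)))).rank ≤ rA := by
  rw [ptraceB_pureDM, rank_self_mul_conjTranspose, coeffMatrix_kronecker_mulVec, Matrix.mul_assoc]
  exact (rank_mul_le_left _ _).trans ((rank_le_card_width V).trans_eq (Fintype.card_fin rA))

end SchmidtRank

section LocalCompression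

open scoped Matrix.Norms.L2Operator

variable {dA dB r : ℕ} {P : Matrix (Fin dA) (Fin dA) ℂ} {Q : Matrix (Fin dB) (Fin dB) ℂ}
  {V : Matrix (Fin dA) (Fin r) ℂ} {W : Matrix (Fin dB) (Fin r) ℂ}
  {ρ : Matrix (Fin dA × Fin dB) (Fin dA × Fin dB) ℂ} {c ε η : ℝ}

/-- The state `(P ⊗ Q) ρ (P ⊗ Q) / Tr ((P ⊗ Q) ρ)`, which is `0` when the real part of the trace
vanishes. -/
def localCompression (P : Matrix (Fin dA) (Fin dA) ℂ) (Q : Matrix (Fin dB) (Fin dB) ℂ)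
    (ρ : Matrix (Fin dA × Fin dB) (Fin dA × Fin dB) ℂ) :
    Matrix (Fin dA × Fin dB) (Fin dA × Fin dB) ℂ :=
  ((1 / ((kron P Q * ρ).trace).re : ℝ) : ℂ) • (kron P Q * ρ * kron P Q)

/-- The expectations of `ρ` in the unit vectors of Schmidt rank at most `r` all lie within `η` of
`c`. The Schmidt rank of `ψ` is encoded as the rank of its reduced density matrix. -/
def IsFlatOnSchmidtRank (ρ : Matrix (Fin dA × Fin dB) (Fin dA × Fin dB) ℂ) (r : ℕ) (c η : ℝ) :
    Prop :=
  ∀ ψ : EuclideanSpace ℂ (Fin dA × Fin dB), ‖ψ‖ = 1 → (ptraceB (pureDM ψ)).rank ≤ r →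
    |((ρ * pureDM ψ).trace).re - c| ≤ η

lemma IsFlatOnSchmidtRank.mono {s : ℕ} (h : IsFlatOnSchmidtRank ρ r c η) (hsr : s ≤ r) :
    IsFlatOnSchmidtRank ρ s c η :=
  fun ψ hψ hrank ↦ h ψ hψ (hrank.trans hsr)

lemma kronecker_conjTranspose_mul_self (hV : Vᴴ * V = 1) (hW : Wᴴ * W = 1) :
    (V ⊗ₖ W)ᴴ * (V ⊗ₖ W) = 1 := by
  rw [conjTranspose_kronecker, ← mul_kronecker_mul, hV, hW, one_kronecker_one]

lemma IsFlatOnSchmidtRank.norm_compression_sub_le [NeZero r] (h : IsFlatOnSchmidtRank ρ r c η)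
    (hρ : ρ.IsHermitian) (hV : Vᴴ * V = 1) (hW : Wᴴ * W = 1) :
    ‖(V ⊗ₖ W)ᴴ * ρ * (V ⊗ₖ W) - (c : ℂ) • 1‖ ≤ η := by
  have hK := kronecker_conjTranspose_mul_self hV hW
  have hherm : ((V ⊗ₖ W)ᴴ * ρ * (V ⊗ₖ W) - (c : ℂ) • 1).IsHermitian :=
    (isHermitian_conjTranspose_mul_mul _ hρ).sub
      (isHermitian_one.smul (Complex.conj_ofReal c))
  refine norm_le_of_abs_re_trace_mul_pureDM_le hherm fun φ hφ ↦ ?_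
  have hexp : (((V ⊗ₖ W)ᴴ * ρ * (V ⊗ₖ W) - (c : ℂ) • 1) * pureDM φ).trace =
      (ρ * pureDM (WithLp.toLp 2 ((V ⊗ₖ W) *ᵥ φ))).trace - c := by
    rw [Matrix.sub_mul, trace_sub, smul_mul, Matrix.one_mul, trace_smul, trace_pureDM, hφ,
      pureDM_toLp_mulVec, ← Matrix.mul_assoc, trace_mul_comm _ (V ⊗ₖ W)ᴴ]
    simp [Matrix.mul_assoc]
  rw [hexp, Complex.sub_re, Complex.ofReal_re]
  exact h _ ((norm_toLp_mulVec_of_isometry hK φ).trans hφ)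
    (rank_ptraceB_pureDM_kronecker_mulVec_le V W φ)

lemma kron_mul_conjTranspose_self :
    kron (V * Vᴴ) (W * Wᴴ) = (V ⊗ₖ W) * (V ⊗ₖ W)ᴴ := by
  rw [kron_eq_kronecker, mul_kronecker_mul, conjTranspose_kronecker]

lemma localCompression_mul_conjTranspose_self
    (V : Matrix (Fin dA) (Fin r) ℂ) (W : Matrix (Fin dB) (Fin r) ℂ)
    (ρ : Matrix (Fin dA × Fin dB) (Fin dA × Fin dB) ℂ) :
    localCompression (V * Vᴴ) (W * Wᴴ) ρ =
      (V ⊗ₖ W) * (((1 / ((V ⊗ₖ W)ᴴ * ρ * (V ⊗ₖ W)).trace.re : ℝ) : ℂ) •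
        ((V ⊗ₖ W)ᴴ * ρ * (V ⊗ₖ W))) * (V ⊗ₖ W)ᴴ := by
  rw [localCompression, kron_mul_conjTranspose_self, Matrix.mul_assoc (V ⊗ₖ W) _ ρ,
    trace_mul_comm (V ⊗ₖ W), Matrix.mul_smul, Matrix.smul_mul]
  simp only [Matrix.mul_assoc]

lemma lt_one_of_le_one_div_two_mul_add_one {x : ℝ} (hx : 0 < x) (hε : ε ≤ 1 / (2 * x + 1)) :
    ε < 1 :=
  hε.trans_lt ((div_lt_one (by positivity)).2 (by linarith))

lemma two_mul_div_le_one_div_pow {x : ℝ} (hx : 0 < x) (hε : ε ≤ 1 / (2 * x + 1)) :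
    2 * ε / (x ^ 2 * (1 - ε)) ≤ 1 / x ^ 3 := by
  have hε1 := sub_pos.2 (lt_one_of_le_one_div_two_mul_add_one hx hε)
  have hεx : ε * (2 * x + 1) ≤ 1 := (le_div_iff₀ (by positivity)).1 hε
  rw [div_le_div_iff₀ (by positivity) (by positivity)]
  calc 2 * ε * x ^ 3 = x ^ 2 * (ε * (2 * x + 1) - ε) := by ring
    _ ≤ x ^ 2 * (1 - ε) := by gcongr
    _ = 1 * (x ^ 2 * (1 - ε)) := (one_mul _).symm

lemma norm_normalize_sub_le_one_div_pow [NeZero r] {M : Matrix (Fin r × Fin r) (Fin r × Fin r) ℂ}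
    (hc : 0 < c) (hε : ε ≤ 1 / (2 * r + 1)) (hM : ‖M - (c : ℂ) • 1‖ ≤ ε * c) :
    ‖((1 / M.trace.re : ℝ) : ℂ) • M - ((1 / (r : ℝ) ^ 2 : ℝ) : ℂ) • 1‖ ≤ 1 / (r : ℝ) ^ 3 := by
  have hr : 0 < (r : ℝ) := Nat.cast_pos.2 (NeZero.pos r)
  have hnorm := norm_normalize_sub_le hc (lt_one_of_le_one_div_two_mul_add_one hr hε) hM
  rw [Fintype.card_prod, Fintype.card_fin, Nat.cast_mul, ← pow_two] at hnorm
  exact hnorm.trans (two_mul_div_le_one_div_pow hr hε)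

lemma normalize_mem_separableCone [NeZero r] {M : Matrix (Fin r × Fin r) (Fin r × Fin r) ℂ}
    (hherm : M.IsHermitian) (hc : 0 < c) (hε : ε ≤ 1 / (2 * r + 1))
    (hM : ‖M - (c : ℂ) • 1‖ ≤ ε * c) :
    ((1 / M.trace.re : ℝ) : ℂ) • M ∈ separableCone (Fin r) (Fin r) := by
  have hdev : (((1 / M.trace.re : ℝ) : ℂ) • M - ((1 / (r : ℝ) ^ 2 : ℝ) : ℂ) • 1).IsHermitian :=
    (hherm.smul (Complex.conj_ofReal _)).sub (isHermitian_one.smul (Complex.conj_ofReal _))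
  have hradius : (r : ℝ) * (1 / (r : ℝ) ^ 3) = 1 / (r : ℝ) ^ 2 := by
    have : (r : ℝ) ≠ 0 := NeZero.ne _
    field_simp
  have hmem := smul_one_add_mem_separableCone hdev (norm_normalize_sub_le_one_div_pow hc hε hM)
  rwa [Fintype.card_fin, hradius, add_sub_cancel] at hmem

theorem opNorm_localCompression_sub_le [NeZero r] (hρ : ρ.IsHermitian) (hc : 0 < c)
    (hε : ε ≤ 1 / (2 * r + 1)) (hflat : IsFlatOnSchmidtRank ρ r c (ε * c))
    (hP : Projector P) (hPr : P.rank = r) (hQ : Projector Q) (hQr : Q.rank = r) :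
    opNorm (localCompression P Q ρ - ((1 / (r : ℝ) ^ 2 : ℝ) : ℂ) • kron P Q) ≤
      1 / (r : ℝ) ^ 3 := by
  obtain ⟨V, rfl, hV⟩ := hP.exists_isometry hPr
  obtain ⟨W, rfl, hW⟩ := hQ.exists_isometry hQr
  set M := (V ⊗ₖ W)ᴴ * ρ * (V ⊗ₖ W)
  have hdiff : localCompression (V * Vᴴ) (W * Wᴴ) ρ -
      ((1 / (r : ℝ) ^ 2 : ℝ) : ℂ) • kron (V * Vᴴ) (W * Wᴴ) =
      (V ⊗ₖ W) * (((1 / M.trace.re : ℝ) : ℂ) • M - ((1 / (r : ℝ) ^ 2 : ℝ) : ℂ) • 1) *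
        (V ⊗ₖ W)ᴴ := by
    rw [localCompression_mul_conjTranspose_self, kron_mul_conjTranspose_self, Matrix.mul_sub,
      Matrix.sub_mul, Matrix.mul_smul _ _ (1 : Matrix _ _ ℂ), Matrix.mul_one, Matrix.smul_mul]
  rw [opNorm_eq_norm, hdiff]
  exact (l2_opNorm_conj_le (kronecker_conjTranspose_mul_self hV hW) _).trans
    (norm_normalize_sub_le_one_div_pow hc hε (hflat.norm_compression_sub_le hρ hV hW))

theorem separable_localCompression [NeZero r] (hρ : ρ.IsHermitian) (hc : 0 < c)
    (hε : ε ≤ 1 / (2 * r + 1)) (hflat : IsFlatOnSchmidtRank ρ r c (ε * c))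
    (hP : Projector P) (hPr : P.rank = r) (hQ : Projector Q) (hQr : Q.rank = r) :
    Separable (localCompression P Q ρ) := by
  obtain ⟨V, rfl, hV⟩ := hP.exists_isometry hPr
  obtain ⟨W, rfl, hW⟩ := hQ.exists_isometry hQr
  have hnorm := hflat.norm_compression_sub_le hρ hV hW
  have hherm := isHermitian_conjTranspose_mul_mul (V ⊗ₖ W) hρ
  have htr : 0 < ((V ⊗ₖ W)ᴴ * ρ * (V ⊗ₖ W)).trace.re := by
    refine lt_of_lt_of_le ?_ (card_mul_le_re_trace hnorm)
    have hr : 0 < (r : ℝ) := Nat.cast_pos.2 (NeZero.pos r)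
    have hε1 := sub_pos.2 (lt_one_of_le_one_div_two_mul_add_one hr hε)
    have : 0 < Fintype.card (Fin r × Fin r) := Fintype.card_pos
    positivity
  rw [localCompression_mul_conjTranspose_self]
  refine separable_of_mem_separableCone
    (conj_kronecker_mem_separableCone (normalize_mem_separableCone hherm hc hε hnorm) V W) ?_
  rw [trace_mul_comm, ← Matrix.mul_assoc, kronecker_conjTranspose_mul_self hV hW, Matrix.one_mul,
    trace_normalize hherm htr.ne']

end LocalCompression

end QIT

theorem not_one_copy_distillable_general {dA dB r : ℕ} (hr : 2 ≤ r)
    {ρ : Matrix (Fin dA × Fin dB) (Fin dA × Fin dB) ℂ} (hρ : ρ.IsHermitian) {c ε : ℝ}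
    (hc : 0 < c) (hε : ε ≤ 1 / (2 * r + 1)) (hflat : QIT.IsFlatOnSchmidtRank ρ r c (ε * c)) :
    (∀ (P : Matrix (Fin dA) (Fin dA) ℂ) (Q : Matrix (Fin dB) (Fin dB) ℂ),
      QIT.Projector P → P.rank = r → QIT.Projector Q → Q.rank = r →
      QIT.opNorm (QIT.localCompression P Q ρ - ((1 / (r : ℝ) ^ 2 : ℝ) : ℂ) • QIT.kron P Q) ≤
          1 / (r : ℝ) ^ 3 ∧
        QIT.Separable (QIT.localCompression P Q ρ)) ∧
    ¬ OneCopyDistillable ρ := by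
  have : NeZero r := ⟨by lia⟩
  refine ⟨fun P Q hP hPr hQ hQr ↦
    ⟨QIT.opNorm_localCompression_sub_le hρ hc hε hflat hP hPr hQ hQr,
      QIT.separable_localCompression hρ hc hε hflat hP hPr hQ hQr⟩, ?_⟩
  rintro ⟨P, Q, hP, hP2, hQ, hQ2, hnpt⟩
  have hε2 : ε ≤ 1 / (2 * (2 : ℕ) + 1) := hε.trans (by gcongr)
  exact hnpt (QIT.separable_localCompression hρ hc hε2 (hflat.mono hr)
    hP hP2 hQ hQ2).posSemidef_ptransposeB

theorem not_one_copy_distillable (dA dB : ℕ) (hA : 2 ≤ dA) (hB : 2 ≤ dB)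
    (ρ : Matrix (Fin dA × Fin dB) (Fin dA × Fin dB) ℂ) (hρ : QIT.DensityMatrix ρ)
    (δ : ℝ) (hδ0 : 0 ≤ δ) (hδ : δ ≤ 1 / 10)
    (h : ∀ ψ : EuclideanSpace ℂ (Fin dA × Fin dB), ‖ψ‖ = 1 →
      (QIT.ptraceB (QIT.pureDM ψ)).rank ≤ 2 →
      |((ρ * QIT.pureDM ψ).trace).re - 1 / ((dA : ℝ) * dB)| ≤ 2 * δ / ((dA : ℝ) * dB)) :
    (∀ (P : Matrix (Fin dA) (Fin dA) ℂ) (Q : Matrix (Fin dB) (Fin dB) ℂ),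
      QIT.Projector P → P.rank = 2 → QIT.Projector Q → Q.rank = 2 →
      QIT.opNorm (((1 / ((QIT.kron P Q * ρ).trace).re : ℝ) : ℂ) •
            (QIT.kron P Q * ρ * QIT.kron P Q) - ((1 / 4 : ℝ) : ℂ) • QIT.kron P Q) ≤ 1 / 8 ∧
      QIT.Separable (((1 / ((QIT.kron P Q * ρ).trace).re : ℝ) : ℂ) •
            (QIT.kron P Q * ρ * QIT.kron P Q))) ∧
    ¬ OneCopyDistillable ρ := by
  have hflat : QIT.IsFlatOnSchmidtRank ρ 2 (1 / ((dA : ℝ) * dB))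
      (2 * δ * (1 / ((dA : ℝ) * dB))) := by rwa [mul_one_div]
  simpa only [QIT.localCompression, Nat.cast_ofNat, (by norm_num : (2 : ℝ) ^ 2 = 4),
    (by norm_num : (2 : ℝ) ^ 3 = 8)] using not_one_copy_distillable_general le_rfl
      hρ.1.isHermitian (by positivity) (by norm_num; linarith) hflat

end
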